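/- The natural homomorphism from Aut(M) to the product ∏_{i ∈ P} Aut(M_i, <_i) × ∏_{i ∉ P} Sym(M_i) is surjective: given, for every i ≥ 1, a permutation σ_i of M_i that preserves the order <_i whenever i ∈ P, there exists an automorphism α of M whose induced action on M_i equals σ_i for every i. -/

import Mathlib

open FirstOrder Language Structure CategoryTheory

/-- The language `L₀` with a `2n`-ary relation symbol `E_n` for each `n ≥ 1`. -/
def L₀ : FirstOrder.Language where
  Functions := fun _ => Empty
  Relations := fun k => {n : ℕ // 0 < n ∧ k = n + n}

/-- The relation symbol `E_n`. -/
def Esymb (n : ℕ) (hn : 0 < n) : L₀.Relations (n + n) := ⟨n, hn, rfl⟩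

/-- `E_n(x̄, ȳ)` in an `L₀`-structure. -/
def ERel (M : Type*) [L₀.Structure M] (n : ℕ) (hn : 0 < n) (x y : Fin n → M) : Prop :=
  Structure.RelMap (Esymb n hn) (Fin.append x y)

/-- The defining conditions for membership in `K₀`: each `E_n` holds only on pairs of
injective `n`-tuples, is invariant under permuting the entries of each tuple separately,
and induces an equivalence relation on `n`-element subsets. -/
def IsK0Struct (C : Type*) [L₀.Structure C] : Prop :=
  ∀ (n : ℕ) (hn : 0 < n),
    (∀ x y : Fin n → C, ERel C n hn x y → Function.Injective x ∧ Function.Injective y) ∧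
    (∀ (x y : Fin n → C) (σ τ : Equiv.Perm (Fin n)),
        ERel C n hn x y → ERel C n hn (x ∘ σ) (y ∘ τ)) ∧
    (∀ x : Fin n → C, Function.Injective x → ERel C n hn x x) ∧
    (∀ x y : Fin n → C, ERel C n hn x y → ERel C n hn y x) ∧
    (∀ x y z : Fin n → C, ERel C n hn x y → ERel C n hn y z → ERel C n hn x z)

/-- The class `K₀` of finite `L₀`-structures as above. -/
def K₀ : Set (Bundled L₀.Structure) := {C | Finite C ∧ IsK0Struct C}

/-- The language `L_P`: a `2n`-ary symbol `E_n` for each `n ≥ 1` and a `2n`-ary symbol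
`<_n` for each `n ∈ P`. -/
def LP (P : Set ℕ) : FirstOrder.Language where
  Functions := fun _ => Empty
  Relations := fun k => {n : ℕ // 0 < n ∧ k = n + n} ⊕ {n : ℕ // n ∈ P ∧ k = n + n}

/-- The symbol `E_n` of `L_P`. -/
def EsymbP (P : Set ℕ) (n : ℕ) (hn : 0 < n) : (LP P).Relations (n + n) :=
  Sum.inl ⟨n, hn, rfl⟩

/-- The symbol `<_n` of `L_P`. -/
def LTsymbP (P : Set ℕ) (n : ℕ) (hn : n ∈ P) : (LP P).Relations (n + n) :=
  Sum.inr ⟨n, hn, rfl⟩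

/-- `E_n(x̄, ȳ)` in an `L_P`-structure. -/
def ERelP (P : Set ℕ) (M : Type*) [i : (LP P).Structure M] (n : ℕ) (hn : 0 < n)
    (x y : Fin n → M) : Prop :=
  @Structure.RelMap (LP P) M i (n + n) (EsymbP P n hn) (Fin.append x y)

/-- `x̄ <_n ȳ` in an `L_P`-structure. -/
def LTRelP (P : Set ℕ) (M : Type*) [i : (LP P).Structure M] (n : ℕ) (hn : n ∈ P)
    (x y : Fin n → M) : Prop :=
  @Structure.RelMap (LP P) M i (n + n) (LTsymbP P n hn) (Fin.append x y)

/-- The defining conditions for membership in `K_P`: the `{E_n}`-part satisfies the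
`K₀`-conditions, and for `n ∈ P` the relation `<_n` holds only on injective tuples, is
`E_n`-invariant, and induces a strict linear order on `E_n`-classes. -/
def IsKPStruct (P : Set ℕ) (C : Type*) [(LP P).Structure C] : Prop :=
  (∀ (n : ℕ) (hn : 0 < n),
    (∀ x y : Fin n → C, ERelP P C n hn x y → Function.Injective x ∧ Function.Injective y) ∧
    (∀ (x y : Fin n → C) (σ τ : Equiv.Perm (Fin n)),
        ERelP P C n hn x y → ERelP P C n hn (x ∘ σ) (y ∘ τ)) ∧
    (∀ x : Fin n → C, Function.Injective x → ERelP P C n hn x x) ∧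
    (∀ x y : Fin n → C, ERelP P C n hn x y → ERelP P C n hn y x) ∧
    (∀ x y z : Fin n → C, ERelP P C n hn x y → ERelP P C n hn y z → ERelP P C n hn x z)) ∧
  (∀ (n : ℕ) (hn : n ∈ P) (hn0 : 0 < n),
    (∀ x y : Fin n → C, LTRelP P C n hn x y → Function.Injective x ∧ Function.Injective y) ∧
    (∀ x x' y y' : Fin n → C, ERelP P C n hn0 x x' → ERelP P C n hn0 y y' →
        LTRelP P C n hn x y → LTRelP P C n hn x' y') ∧
    (∀ x y : Fin n → C, LTRelP P C n hn x y → ¬ ERelP P C n hn0 x y) ∧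
    (∀ x y z : Fin n → C, LTRelP P C n hn x y → LTRelP P C n hn y z → LTRelP P C n hn x z) ∧
    (∀ x y : Fin n → C, Function.Injective x → Function.Injective y →
        ¬ ERelP P C n hn0 x y → LTRelP P C n hn x y ∨ LTRelP P C n hn y x))

/-- The class `K_P` of finite `L_P`-structures as above. -/
def KP (P : Set ℕ) : Set (Bundled (LP P).Structure) := {C | Finite C ∧ IsKPStruct P C}

/-!
For finite `C ⊆ M` and finitely many new points, the classes of the subsets of the enlarged set
that are not contained in `C` may be prescribed arbitrarily among the classes of `M`, and the
prescription is realised in `M`. Indeed it pulls the relations of `M` back to a structure in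
`K_P`: the linear orders `<_n` live on the classes and so put no constraint on it. To make the
prescribed classes those of `M` itself, and not merely isomorphic to them, the finite structure is
enlarged by representatives of these classes before it is embedded over `C` by ultrahomogeneity.

Now name every class `c` of `M` by a relation symbol holding of the tuples in `c`, and let the
same symbol denote `σ c` on the other side. By the above, any finite name-preserving map extends
to one more point, in both directions, so back-and-forth gives a bijection which preserves names.
It maps each class `c` to `σ c`, and is an automorphism since `σ` respects the relations between
classes.
-/

universe u

section Relations

variable {P : Set ℕ}

instance : (LP P).IsRelational := fun _ => inferInstanceAs (IsEmpty Empty)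

theorem append_comp_comp {α β : Type*} {m n : ℕ} (φ : α → β) (x : Fin m → α) (y : Fin n → α) :
    Fin.append (φ ∘ x) (φ ∘ y) = φ ∘ Fin.append x y := by
  ext i
  refine Fin.addCases (fun i => ?_) (fun i => ?_) i <;> simp

section Maps

variable {M N F : Type*} [(LP P).Structure M] [(LP P).Structure N]

theorem eRelP_comp_iff [FunLike F M N] [StrongHomClass (LP P) F M N] (φ : F) {n : ℕ} (hn : 0 < n)
    (x y : Fin n → M) : ERelP P N n hn (φ ∘ x) (φ ∘ y) ↔ ERelP P M n hn x y := by
  unfold ERelP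
  rw [append_comp_comp, StrongHomClass.map_rel φ]

theorem ltRelP_comp_iff [FunLike F M N] [StrongHomClass (LP P) F M N] (φ : F) {n : ℕ}
    (hn : n ∈ P) (x y : Fin n → M) :
    LTRelP P N n hn (φ ∘ x) (φ ∘ y) ↔ LTRelP P M n hn x y := by
  unfold LTRelP
  rw [append_comp_comp, StrongHomClass.map_rel φ]

theorem relMap_comp_iff_of_forall (φ : M → N)
    (hE : ∀ n hn (x y : Fin n → M), ERelP P N n hn (φ ∘ x) (φ ∘ y) ↔ ERelP P M n hn x y)
    (hLT : ∀ n hn (x y : Fin n → M), LTRelP P N n hn (φ ∘ x) (φ ∘ y) ↔ LTRelP P M n hn x y)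
    {k : ℕ} (R : (LP P).Relations k) (z : Fin k → M) : RelMap R (φ ∘ z) ↔ RelMap R z := by
  rcases R with ⟨n, hn, rfl⟩ | ⟨n, hn, rfl⟩
  all_goals
    obtain ⟨x, y, rfl⟩ : ∃ x y : Fin n → M, Fin.append x y = z :=
      ⟨fun i => z (Fin.castAdd n i), fun i => z (Fin.natAdd n i), Fin.append_castAdd_natAdd⟩
    rw [← append_comp_comp]
  · exact hE n hn x y
  · exact hLT n hn x y

end Maps

/-- The `L_P`-structure on `D` in which `E_n` and `<_n` are prescribed relations on tuples. -/
abbrev structureOfRel {D : Type*} (E : ∀ n, 0 < n → (Fin n → D) → (Fin n → D) → Prop)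
    (Lt : ∀ n ∈ P, (Fin n → D) → (Fin n → D) → Prop) : (LP P).Structure D where
  funMap := isEmptyElim
  RelMap R z := match R with
    | .inl ⟨n, h⟩ => E n h.1 (fun i => z (Fin.cast h.2.symm (Fin.castAdd n i)))
        (fun i => z (Fin.cast h.2.symm (Fin.natAdd n i)))
    | .inr ⟨n, h⟩ => Lt n h.1 (fun i => z (Fin.cast h.2.symm (Fin.castAdd n i)))
        (fun i => z (Fin.cast h.2.symm (Fin.natAdd n i)))

variable {D : Type*} (E : ∀ n, 0 < n → (Fin n → D) → (Fin n → D) → Prop)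
  (Lt : ∀ n ∈ P, (Fin n → D) → (Fin n → D) → Prop)

theorem eRelP_structureOfRel {n : ℕ} (hn : 0 < n) (x y : Fin n → D) :
    @ERelP P D (structureOfRel E Lt) n hn x y ↔ E n hn x y := by
  change E n hn (fun i => Fin.append x y (Fin.castAdd n i))
    (fun i => Fin.append x y (Fin.natAdd n i)) ↔ _
  simp only [Fin.append_left, Fin.append_right]

theorem ltRelP_structureOfRel {n : ℕ} (hn : n ∈ P) (x y : Fin n → D) :
    @LTRelP P D (structureOfRel E Lt) n hn x y ↔ Lt n hn x y := by
  change Lt n hn (fun i => Fin.append x y (Fin.castAdd n i))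
    (fun i => Fin.append x y (Fin.natAdd n i)) ↔ _
  simp only [Fin.append_left, Fin.append_right]

end Relations

namespace IsKPStruct

variable {P : Set ℕ} {M : Type*} [(LP P).Structure M] {n : ℕ} {x x' y y' z : Fin n → M}

theorem injective_of_eRelP (hM : IsKPStruct P M) {hn : 0 < n} (h : ERelP P M n hn x y) :
    Function.Injective x ∧ Function.Injective y :=
  (hM.1 n hn).1 x y h

theorem eRelP_refl (hM : IsKPStruct P M) (hn : 0 < n) (hx : Function.Injective x) :
    ERelP P M n hn x x :=
  (hM.1 n hn).2.2.1 x hx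

theorem eRelP_symm (hM : IsKPStruct P M) {hn : 0 < n} (h : ERelP P M n hn x y) :
    ERelP P M n hn y x :=
  (hM.1 n hn).2.2.2.1 x y h

theorem eRelP_trans (hM : IsKPStruct P M) {hn : 0 < n} (hxy : ERelP P M n hn x y)
    (hyz : ERelP P M n hn y z) : ERelP P M n hn x z :=
  (hM.1 n hn).2.2.2.2 x y z hxy hyz

theorem eRelP_congr_left (hM : IsKPStruct P M) {hn : 0 < n} (hx : ERelP P M n hn x x') :
    ERelP P M n hn x y ↔ ERelP P M n hn x' y :=
  ⟨hM.eRelP_trans (hM.eRelP_symm hx), hM.eRelP_trans hx⟩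

theorem eRelP_congr_right (hM : IsKPStruct P M) {hn : 0 < n} (hy : ERelP P M n hn y y') :
    ERelP P M n hn x y ↔ ERelP P M n hn x y' :=
  ⟨fun h => hM.eRelP_trans h hy, fun h => hM.eRelP_trans h (hM.eRelP_symm hy)⟩

theorem eRelP_congr (hM : IsKPStruct P M) {hn : 0 < n} (hx : ERelP P M n hn x x')
    (hy : ERelP P M n hn y y') : ERelP P M n hn x y ↔ ERelP P M n hn x' y' :=
  (hM.eRelP_congr_left hx).trans (hM.eRelP_congr_right hy)

theorem eRelP_comp_perm (hM : IsKPStruct P M) (hn : 0 < n) (hx : Function.Injective x)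
    (τ : Equiv.Perm (Fin n)) : ERelP P M n hn (x ∘ τ) x :=
  (hM.1 n hn).2.1 x x τ 1 (hM.eRelP_refl hn hx)

theorem injective_of_ltRelP (hM : IsKPStruct P M) {hn : n ∈ P} (h : LTRelP P M n hn x y) :
    Function.Injective x ∧ Function.Injective y := by
  rcases n.eq_zero_or_pos with rfl | hn0
  · exact ⟨Function.injective_of_subsingleton x, Function.injective_of_subsingleton y⟩
  · exact (hM.2 n hn hn0).1 x y h

theorem ltRelP_congr (hM : IsKPStruct P M) (hn : n ∈ P) (hx : ∀ hn0, ERelP P M n hn0 x x')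
    (hy : ∀ hn0, ERelP P M n hn0 y y') : LTRelP P M n hn x y ↔ LTRelP P M n hn x' y' := by
  rcases n.eq_zero_or_pos with rfl | hn0
  · rw [Subsingleton.elim x x', Subsingleton.elim y y']
  · exact ⟨(hM.2 n hn hn0).2.1 _ _ _ _ (hx hn0) (hy hn0), (hM.2 n hn hn0).2.1 _ _ _ _
      (hM.eRelP_symm (hx hn0)) (hM.eRelP_symm (hy hn0))⟩

end IsKPStruct

section Age

variable {P : Set ℕ}

theorem exists_finite_substructure_four_tuples {L : FirstOrder.Language} [L.IsRelational]
    {M : Type*} [L.Structure M] {ι : Type*} [Finite ι] (x y z w : ι → M) :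
    ∃ S : L.Substructure M, Finite S ∧ ∃ x' y' z' w' : ι → S, S.subtype ∘ x' = x ∧
      S.subtype ∘ y' = y ∧ S.subtype ∘ z' = z ∧ S.subtype ∘ w' = w := by
  let t : ι → Set M := fun i => {x i, y i, z i, w i}
  let S : L.Substructure M := ⟨⋃ i, t i, isEmptyElim⟩
  have mem (i : ι) {a : M} (h : a ∈ t i) : a ∈ S := Set.mem_iUnion_of_mem i h
  exact ⟨S, Set.finite_iUnion fun i => Set.toFinite (t i),
    fun i => ⟨x i, mem i (by simp [t])⟩, fun i => ⟨y i, mem i (by simp [t])⟩,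
    fun i => ⟨z i, mem i (by simp [t])⟩, fun i => ⟨w i, mem i (by simp [t])⟩, rfl, rfl, rfl, rfl⟩

/- Every axiom of `IsKPStruct` mentions at most four tuples, so it can be checked on the finite set
of their entries. -/
theorem isKPStruct_of_finite_substructures {M : Type*} [(LP P).Structure M]
    (h : ∀ S : (LP P).Substructure M, Finite S → IsKPStruct P S) : IsKPStruct P M := by
  have lift {n : ℕ} (x y z w : Fin n → M) : ∃ S : (LP P).Substructure M, IsKPStruct P S ∧
      ∃ x' y' z' w' : Fin n → S, S.subtype ∘ x' = x ∧ S.subtype ∘ y' = y ∧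
        S.subtype ∘ z' = z ∧ S.subtype ∘ w' = w := by
    obtain ⟨S, hfin, hS⟩ := exists_finite_substructure_four_tuples (L := LP P) x y z w
    exact ⟨S, h S hfin, hS⟩
  have inj {n : ℕ} {S : (LP P).Substructure M} (x : Fin n → S) :
      Function.Injective (S.subtype ∘ x) ↔ Function.Injective x :=
    S.subtype.injective.of_comp_iff x
  refine ⟨fun n hn => ⟨fun x y => ?_, fun x y σ τ => ?_, fun x => ?_, fun x y => ?_,
    fun x y z => ?_⟩, fun n hn hn0 => ⟨fun x y => ?_, fun x x' y y' => ?_, fun x y => ?_,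
    fun x y z => ?_, fun x y => ?_⟩⟩
  · obtain ⟨S, hS, x, y, -, -, rfl, rfl, -, -⟩ := lift x y y y
    simpa only [inj, eRelP_comp_iff] using (hS.1 n hn).1 x y
  · obtain ⟨S, hS, x, y, -, -, rfl, rfl, -, -⟩ := lift x y y y
    simpa only [Function.comp_assoc, eRelP_comp_iff] using (hS.1 n hn).2.1 x y σ τ
  · obtain ⟨S, hS, x, -, -, -, rfl, -, -, -⟩ := lift x x x x
    simpa only [inj, eRelP_comp_iff] using (hS.1 n hn).2.2.1 x
  · obtain ⟨S, hS, x, y, -, -, rfl, rfl, -, -⟩ := lift x y y y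
    simpa only [eRelP_comp_iff] using (hS.1 n hn).2.2.2.1 x y
  · obtain ⟨S, hS, x, y, z, -, rfl, rfl, rfl, -⟩ := lift x y z z
    simpa only [eRelP_comp_iff] using (hS.1 n hn).2.2.2.2 x y z
  · obtain ⟨S, hS, x, y, -, -, rfl, rfl, -, -⟩ := lift x y y y
    simpa only [inj, ltRelP_comp_iff] using (hS.2 n hn hn0).1 x y
  · obtain ⟨S, hS, x, x', y, y', rfl, rfl, rfl, rfl⟩ := lift x x' y y'
    simpa only [eRelP_comp_iff, ltRelP_comp_iff] using (hS.2 n hn hn0).2.1 x x' y y'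
  · obtain ⟨S, hS, x, y, -, -, rfl, rfl, -, -⟩ := lift x y y y
    simpa only [eRelP_comp_iff, ltRelP_comp_iff] using (hS.2 n hn hn0).2.2.1 x y
  · obtain ⟨S, hS, x, y, z, -, rfl, rfl, rfl, -⟩ := lift x y z z
    simpa only [ltRelP_comp_iff] using (hS.2 n hn hn0).2.2.2.1 x y z
  · obtain ⟨S, hS, x, y, -, -, rfl, rfl, -, -⟩ := lift x y y y
    simpa only [inj, eRelP_comp_iff, ltRelP_comp_iff] using (hS.2 n hn hn0).2.2.2.2 x y

variable {M : Type u} [(LP P).Structure M]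

theorem isKPStruct_of_age_subset (hage : (LP P).age M ⊆ KP P) : IsKPStruct P M :=
  isKPStruct_of_finite_substructures fun _ _ =>
    (hage (age.fg_substructure Substructure.FG.of_finite)).2

theorem infinite_of_subset_age (hage : KP P ⊆ (LP P).age M) : Infinite M := by
  refine not_finite_iff_infinite.1 fun hfin => ?_
  let D := ULift.{u} (Fin (Nat.card M + 1))
  let : (LP P).Structure D := structureOfRel
    (fun _ _ x y => Function.Injective x ∧ Function.Injective y) (fun _ _ _ _ => False)
  have hD : IsKPStruct P D := by
    simp only [IsKPStruct, eRelP_structureOfRel, ltRelP_structureOfRel]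
    refine ⟨fun n _ => ⟨fun _ _ => id, fun x y σ τ h => ⟨h.1.comp σ.injective,
      h.2.comp τ.injective⟩, fun x h => ⟨h, h⟩, fun x y h => h.symm,
      fun x y z h h' => ⟨h.1, h'.2⟩⟩, fun n _ _ => ⟨by simp, by simp, by simp, by simp, ?_⟩⟩
    exact fun x y hx hy h => (h ⟨hx, hy⟩).elim
  have hD_mem : Bundled.of (c := (LP P).Structure) D ∈ KP P := ⟨inferInstanceAs (Finite D), hD⟩
  obtain ⟨-, ⟨f⟩⟩ := hage hD_mem
  have hcard := Nat.card_le_card_of_injective _ f.injective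
  change Nat.card D ≤ _ at hcard
  simp [D] at hcard

end Age

/-- A choice, for every finite tuple of `D`, of a tuple of `M`, whose `E_n`-class depends only on
the set of entries when the tuple of `D` is injective. It encodes an assignment of an element of
`M_n` to every `n`-element subset of `D`; the values `g n x` are injective on injective `x`, as
`E_n` only relates injective tuples. -/
def IsClassAssignment (P : Set ℕ) (M : Type*) [(LP P).Structure M] {D : Type*}
    (g : ∀ n, (Fin n → D) → Fin n → M) : Prop :=
  ∀ ⦃n : ℕ⦄ (hn : 0 < n) ⦃x : Fin n → D⦄, Function.Injective x → ∀ τ : Equiv.Perm (Fin n),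
    ERelP P M n hn (g n (x ∘ τ)) (g n x)

/-- The `L_P`-structure on `D` pulled back along a map of tuples: two subsets of `D` are
equivalent when they are assigned the same class of `M`, and they are ordered as these classes. -/
abbrev pullbackStructure (P : Set ℕ) {M D : Type*} [(LP P).Structure M]
    (g : ∀ n, (Fin n → D) → Fin n → M) : (LP P).Structure D :=
  structureOfRel
    (fun n hn x y => Function.Injective x ∧ Function.Injective y ∧ ERelP P M n hn (g n x) (g n y))
    (fun n hn x y => Function.Injective x ∧ Function.Injective y ∧ LTRelP P M n hn (g n x) (g n y))

namespace IsClassAssignment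

variable {P : Set ℕ} {M D : Type*} [(LP P).Structure M] {g : ∀ n, (Fin n → D) → Fin n → M}

theorem eRelP_self (hg : IsClassAssignment P M g) {n : ℕ} (hn : 0 < n) {x : Fin n → D}
    (hx : Function.Injective x) : ERelP P M n hn (g n x) (g n x) :=
  hg hn hx 1

protected theorem id (hM : IsKPStruct P M) : IsClassAssignment P M fun n (x : Fin n → M) => x :=
  fun _ hn _ hx τ => hM.eRelP_comp_perm hn hx τ

protected theorem const (hM : IsKPStruct P M) {d : ∀ n, Fin n → M}
    (hd : ∀ n, Function.Injective (d n)) : IsClassAssignment P M fun n (_ : Fin n → D) => d n :=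
  fun n hn _ _ _ => hM.eRelP_refl hn (hd n)

theorem comp_embedding (hg : IsClassAssignment P M g) {D' : Type*} (e : D' ↪ D) :
    IsClassAssignment P M fun n (x : Fin n → D') => g n (e ∘ x) :=
  fun _ hn _ hx τ => hg hn (e.injective.comp hx) τ

theorem extend (hg : IsClassAssignment P M g) {D' : Type*} (e : D' ↪ D)
    {g' : ∀ n, (Fin n → D') → Fin n → M} (hg' : IsClassAssignment P M g') :
    IsClassAssignment P M fun n => Function.extend (e ∘ ·) (g' n) (g n) := by
  intro n hn x hx τ
  beta_reduce
  have he : Function.Injective ((e ∘ ·) : (Fin n → D') → Fin n → D) := e.injective.comp_left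
  by_cases h : ∃ y, e ∘ y = x
  · obtain ⟨y, rfl⟩ := h
    have hτ : (e ∘ y) ∘ τ = e ∘ (y ∘ τ) := rfl
    rw [hτ, he.extend_apply, he.extend_apply]
    exact hg' hn hx.of_comp τ
  · have hτ : ¬∃ y, e ∘ y = x ∘ τ := fun ⟨y, hy⟩ =>
      h ⟨y ∘ τ.symm, by rw [← Function.comp_assoc, hy, Function.comp_assoc]; simp⟩
    rw [Function.extend_apply' _ _ _ h, Function.extend_apply' _ _ _ hτ]
    exact hg hn hx τ

theorem isKPStruct_pullbackStructure (hM : IsKPStruct P M) (hg : IsClassAssignment P M g) :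
    @IsKPStruct P D (pullbackStructure P g) := by
  simp only [IsKPStruct, eRelP_structureOfRel, ltRelP_structureOfRel]
  refine ⟨fun n hn => ⟨?_, ?_, ?_, ?_, ?_⟩, fun n hn hn0 => ⟨?_, ?_, ?_, ?_, ?_⟩⟩
  · exact fun x y h => ⟨h.1, h.2.1⟩
  · exact fun x y σ τ ⟨hx, hy, h⟩ => ⟨hx.comp σ.injective, hy.comp τ.injective,
      (hM.eRelP_congr (hg hn hx σ) (hg hn hy τ)).2 h⟩
  · exact fun x hx => ⟨hx, hx, hg.eRelP_self hn hx⟩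
  · exact fun x y ⟨hx, hy, h⟩ => ⟨hy, hx, hM.eRelP_symm h⟩
  · exact fun x y z ⟨hx, _, h⟩ ⟨_, hz, h'⟩ => ⟨hx, hz, hM.eRelP_trans h h'⟩
  · exact fun x y h => ⟨h.1, h.2.1⟩
  · exact fun x x' y y' ⟨_, hx', hE⟩ ⟨_, hy', hE'⟩ ⟨_, _, h⟩ => ⟨hx', hy',
      (hM.ltRelP_congr hn (fun _ => hE) (fun _ => hE')).1 h⟩
  · exact fun x y ⟨_, _, h⟩ ⟨_, _, hE⟩ => (hM.2 n hn hn0).2.2.1 _ _ h hE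
  · exact fun x y z ⟨hx, _, h⟩ ⟨_, hz, h'⟩ => ⟨hx, hz, (hM.2 n hn hn0).2.2.2.1 _ _ _ h h'⟩
  · intro x y hx hy hE
    refine ((hM.2 n hn hn0).2.2.2.2 (g n x) (g n y) ?_ ?_ fun h => hE ⟨hx, hy, h⟩).imp
      (fun h => ⟨hx, hy, h⟩) fun h => ⟨hy, hx, h⟩
    · exact (hM.injective_of_eRelP (hg.eRelP_self hn0 hx)).1
    · exact (hM.injective_of_eRelP (hg.eRelP_self hn0 hy)).1

end IsClassAssignment

theorem exists_finite_superset_of_injective_tuples {D : Type*} {T : Set D} (hT : T.Finite)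
    (G : ∀ n, (Fin n → D) → Fin n → D) :
    ∃ U : Set D, U.Finite ∧ T ⊆ U ∧
      ∀ n (x : Fin n → D), Function.Injective x → (∀ i, x i ∈ T) → ∀ i, G n x i ∈ U := by
  have := hT.to_subtype
  refine ⟨T ∪ ⋃ n : Fin (Nat.card T + 1), ⋃ x : Fin n → T, Set.range (G n (Subtype.val ∘ x)),
    hT.union (Set.toFinite _), Set.subset_union_left, fun n x hx hxT i => Or.inr ?_⟩
  have hn : n ≤ Nat.card T := by
    simpa using Nat.card_le_card_of_injective (fun i => (⟨x i, hxT i⟩ : T))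
      fun i j hij => hx (congrArg Subtype.val hij)
  simp only [Set.mem_iUnion]
  exact ⟨⟨n, Nat.lt_succ_of_le hn⟩, fun i => ⟨x i, hxT i⟩, i, rfl⟩

section Realization

variable {P : Set ℕ}

theorem relMap_pullbackStructure_comp_iff {N C D : Type*} [(LP P).Structure N] [(LP P).Structure C]
    (hN : IsKPStruct P N) {g : ∀ n, (Fin n → D) → Fin n → N} (ι : C ↪[LP P] N) (e : C ↪ D)
    (he : ∀ n (hn : 0 < n) (v : Fin n → C), Function.Injective v →
      ERelP P N n hn (g n (e ∘ v)) (ι ∘ v)) {k : ℕ} (R : (LP P).Relations k) (z : Fin k → C) :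
    @RelMap (LP P) D (pullbackStructure P g) k R (e ∘ z) ↔ RelMap R z := by
  let := pullbackStructure P g
  have inj {n : ℕ} (v : Fin n → C) : Function.Injective (e ∘ v) ↔ Function.Injective (ι ∘ v) := by
    rw [e.injective.of_comp_iff, ι.injective.of_comp_iff]
  have he' {n : ℕ} (hn : 0 < n) (v : Fin n → C) (hv : Function.Injective (ι ∘ v)) :
      ERelP P N n hn (g n (e ∘ v)) (ι ∘ v) := he n hn v hv.of_comp
  refine relMap_comp_iff_of_forall e (fun n hn x y => ?_) (fun n hn x y => ?_) R z
  · rw [eRelP_structureOfRel, ← eRelP_comp_iff ι, inj, inj]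
    exact ⟨fun ⟨hx, hy, h⟩ => (hN.eRelP_congr (he' hn x hx) (he' hn y hy)).1 h, fun h =>
      have ⟨hx, hy⟩ := hN.injective_of_eRelP h
      ⟨hx, hy, (hN.eRelP_congr (he' hn x hx) (he' hn y hy)).2 h⟩⟩
  · rw [ltRelP_structureOfRel, ← ltRelP_comp_iff ι, inj, inj]
    exact ⟨fun ⟨hx, hy, h⟩ => (hN.ltRelP_congr hn (he' · x hx) (he' · y hy)).1 h, fun h =>
      have ⟨hx, hy⟩ := hN.injective_of_ltRelP h
      ⟨hx, hy, (hN.ltRelP_congr hn (he' · x hx) (he' · y hy)).2 h⟩⟩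

variable {N D : Type u} [(LP P).Structure N] {g : ∀ n, (Fin n → D) → Fin n → N}

namespace IsClassAssignment

theorem exists_embedding_extending (hg : IsClassAssignment P N g) (hN : IsKPStruct P N)
    (hUH : (LP P).IsUltrahomogeneous N) (hage : KP P ⊆ (LP P).age N) (j : N ↪ D)
    (hj : ∀ n (hn : 0 < n) (v : Fin n → N), Function.Injective v →
      ERelP P N n hn (g n (j ∘ v)) v)
    {U : Set D} (hU : U.Finite) :
    ∃ h : U ↪ N, (∀ a (ha : j a ∈ U), h ⟨j a, ha⟩ = a) ∧
      ∀ n (hn : 0 < n) (x y : Fin n → U), Function.Injective x → Function.Injective y →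
        ERelP P N n hn (g n (Subtype.val ∘ x)) (g n (Subtype.val ∘ y)) →
        ERelP P N n hn (h ∘ x) (h ∘ y) := by
  let gU (n : ℕ) (x : Fin n → U) : Fin n → N := g n (Subtype.val ∘ x)
  let : (LP P).Structure U := pullbackStructure P gU
  have hgU : IsClassAssignment P N gU := hg.comp_embedding (Function.Embedding.subtype _)
  have hU_mem : Bundled.of (c := (LP P).Structure) U ∈ KP P :=
    ⟨hU.to_subtype, hgU.isKPStruct_pullbackStructure hN⟩
  have : Nonempty (U ↪[LP P] N) := (hage hU_mem).2
  let C : (LP P).Substructure N := ⟨j ⁻¹' U, isEmptyElim⟩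
  have : Finite C := (hU.preimage j.injective.injOn : (j ⁻¹' U).Finite).to_subtype
  let jC : C ↪ U := ⟨fun c => ⟨j c, c.2⟩, fun _ _ h =>
    Subtype.ext (j.injective (congrArg Subtype.val h))⟩
  let i : C ↪[LP P] U := ⟨jC, isEmptyElim, relMap_pullbackStructure_comp_iff hN C.subtype jC
    fun n hn v hv => hj n hn (C.subtype ∘ v) (C.subtype.injective.comp hv)⟩
  obtain ⟨h, hh⟩ := hUH.extend_embedding FG.of_finite C.subtype i
  refine ⟨h.toEmbedding, fun a ha => (DFunLike.congr_fun hh (⟨a, ha⟩ : C)).symm, ?_⟩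
  intro n hn x y hx hy hxy
  exact (eRelP_comp_iff h hn x y).2 ((eRelP_structureOfRel ..).2 ⟨hx, hy, hxy⟩)

theorem exists_realization (hg : IsClassAssignment P N g) (hN : IsKPStruct P N)
    (hUH : (LP P).IsUltrahomogeneous N) (hage : KP P ⊆ (LP P).age N) (j : N ↪ D)
    (hj : ∀ n (hn : 0 < n) (v : Fin n → N), Function.Injective v →
      ERelP P N n hn (g n (j ∘ v)) v)
    {A : Type*} [Finite A] (e : A ↪ D) :
    ∃ k : A ↪ N, (∀ a b, e a = j b → k a = b) ∧
      ∀ n (hn : 0 < n) (x : Fin n → A), Function.Injective x →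
        ERelP P N n hn (k ∘ x) (g n (e ∘ x)) := by
  -- Along with the tuple `e ∘ x`, `U` contains a tuple of `N` in the class prescribed for it.
  obtain ⟨U, hU, heU, hgU⟩ := exists_finite_superset_of_injective_tuples (Set.finite_range e)
    fun n x => j ∘ g n x
  obtain ⟨h, hhj, hh⟩ := hg.exists_embedding_extending hN hUH hage j hj hU
  let eU : A ↪ U := ⟨fun a => ⟨e a, heU ⟨a, rfl⟩⟩, fun _ _ hab =>
    e.injective (congrArg Subtype.val hab)⟩
  refine ⟨eU.trans h, fun a b hab => ?_, fun n hn x hx => ?_⟩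
  · have hb : j b ∈ U := hab ▸ heU ⟨a, rfl⟩
    exact (congrArg h (Subtype.ext hab)).trans (hhj b hb)
  · have hex : Function.Injective (e ∘ x) := e.injective.comp hx
    have hgx : Function.Injective (g n (e ∘ x)) :=
      (hN.injective_of_eRelP (hg.eRelP_self hn hex)).1
    let y (i : Fin n) : U := ⟨j (g n (e ∘ x) i), hgU n (e ∘ x) hex (fun i => ⟨x i, rfl⟩) i⟩
    have hy : Function.Injective y := fun _ _ hab =>
      hgx (j.injective (congrArg Subtype.val hab))
    have hhy : h ∘ y = g n (e ∘ x) := funext fun i => hhj _ _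
    rw [← hhy]
    exact hh n hn (eU ∘ x) y (eU.injective.comp hx) hy (hN.eRelP_symm (hj n hn _ hgx))

end IsClassAssignment

theorem extend_inl_inr_eq_inl_iff {S A B : Type*} {ι : S → A} (hι : Function.Injective ι)
    {f : S → B} {a : A} {b : B} :
    Function.extend ι (Sum.inl ∘ f) Sum.inr a = Sum.inl b ↔ ∃ s, ι s = a ∧ f s = b := by
  by_cases h : ∃ s, ι s = a
  · obtain ⟨s, rfl⟩ := h
    simp [hι.extend_apply, hι.eq_iff]
  · rw [Function.extend_apply' _ _ _ h]
    exact iff_of_false Sum.inr_ne_inl fun ⟨s, hs, _⟩ => h ⟨s, hs⟩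

theorem injective_extend_inl_inr {S A B : Type*} {ι : S → A} (hι : Function.Injective ι)
    {f : S → B} (hf : Function.Injective f) :
    Function.Injective (Function.extend ι (Sum.inl ∘ f) Sum.inr : A → B ⊕ A) := by
  intro a a' h
  by_cases ha : ∃ s, ι s = a
  · obtain ⟨s, rfl⟩ := ha
    rw [hι.extend_apply, Function.comp_apply, eq_comm, extend_inl_inr_eq_inl_iff hι] at h
    obtain ⟨s', rfl, hs⟩ := h
    rw [hf hs]
  · rw [Function.extend_apply' _ _ _ ha, eq_comm] at h
    by_cases ha' : ∃ s, ι s = a'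
    · obtain ⟨s', rfl⟩ := ha'
      rw [hι.extend_apply] at h
      cases h
    · rw [Function.extend_apply' _ _ _ ha'] at h
      exact (Sum.inr_injective h).symm

namespace IsClassAssignment

theorem exists_extension_realizing {S : Type*} {A : Type u} [Finite A]
    {t : ∀ n, (Fin n → A) → Fin n → N} (ht : IsClassAssignment P N t) (hN : IsKPStruct P N)
    (hUH : (LP P).IsUltrahomogeneous N) (hage : KP P ⊆ (LP P).age N) (ι : S ↪ A) (f : S ↪ N)
    (hf : ∀ n (hn : 0 < n) (s : Fin n → S), Function.Injective s →
      ERelP P N n hn (f ∘ s) (t n (ι ∘ s))) :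
    ∃ k : A ↪ N, (∀ s, k (ι s) = f s) ∧ ∀ n (hn : 0 < n) (x : Fin n → A), Function.Injective x →
      ERelP P N n hn (k ∘ x) (t n x) := by
  have := infinite_of_subset_age hage
  let d (n : ℕ) : Fin n → N := Infinite.natEmbedding N ∘ Fin.val
  have hd (n : ℕ) : Function.Injective (d n) :=
    (Infinite.natEmbedding N).injective.comp Fin.val_injective
  let e : A ↪ N ⊕ A := ⟨_, injective_extend_inl_inr ι.injective f.injective⟩
  have he {a b} : e a = Sum.inl b ↔ ∃ s, ι s = a ∧ f s = b :=
    extend_inl_inr_eq_inl_iff ι.injective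
  let j : N ↪ N ⊕ A := Function.Embedding.inl
  -- Tuples of `N` are assigned their own class, tuples of `A` the class given by `t`, and mixed
  -- tuples the arbitrary class of `d n`.
  let g (n : ℕ) : (Fin n → N ⊕ A) → Fin n → N :=
    Function.extend (j ∘ ·) id (Function.extend (e ∘ ·) (t n) fun _ => d n)
  have hg : IsClassAssignment P N g :=
    ((IsClassAssignment.const hN hd).extend e ht).extend j (.id hN)
  have hgj (n : ℕ) (v : Fin n → N) : g n (j ∘ v) = v := j.injective.comp_left.extend_apply _ _ v
  obtain ⟨k, hk, hkg⟩ := hg.exists_realization hN hUH hage j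
    (fun n hn v hv => by rw [hgj]; exact hN.eRelP_refl hn hv) e
  refine ⟨k, fun s => hk _ _ (he.2 ⟨s, rfl, rfl⟩), fun n hn x hx => ?_⟩
  refine hN.eRelP_trans (hkg n hn x hx) ?_
  by_cases h : ∃ v, j ∘ v = e ∘ x
  · obtain ⟨v, hv⟩ := h
    choose s hs hfs using fun i => he.1 (congrFun hv i).symm
    obtain rfl : ι ∘ s = x := funext hs
    obtain rfl : f ∘ s = v := funext hfs
    rw [← hv, hgj]
    exact hf n hn s hx.of_comp
  · have hgx : g n (e ∘ x) = t n x :=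
      (Function.extend_apply' _ _ _ h).trans (e.injective.comp_left.extend_apply _ _ x)
    rw [hgx]
    exact ht.eRelP_self hn hx

end IsClassAssignment

end Realization

/-- The names `c : Λ n`, with `c` naming the `E_n`-class of `r n c`, are enough to name every class
of `M`. A class may have several names. For `n = 0`, where there is no `E_n`, some name has to
exist, since `P` may contain `0`. -/
def IsNaming (P : Set ℕ) {M : Type*} [(LP P).Structure M] {Λ : ℕ → Type*}
    (r : ∀ n, Λ n → Fin n → M) : Prop :=
  ∀ n (v : Fin n → M), Function.Injective v → ∃ c, ∀ hn : 0 < n, ERelP P M n hn v (r n c)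

/-- The relational language with one `n`-ary symbol for each name `c : Λ n` of a class of
`n`-element subsets, `n ≥ 1`. -/
def namingLanguage (Λ : ℕ → Type*) : FirstOrder.Language where
  Functions _ := Empty
  Relations n := {_c : Λ n // 0 < n}

/-- The structure on `M` in which the name `c` holds of the tuples in the `E_n`-class of `r n c`. -/
abbrev namingStructure (P : Set ℕ) {M : Type*} [(LP P).Structure M] {Λ : ℕ → Type*}
    (r : ∀ n, Λ n → Fin n → M) : (namingLanguage Λ).Structure M where
  funMap := Empty.elim
  RelMap c v := ERelP P M _ c.2 v (r _ c.1)

section Naming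

variable {P : Set ℕ} {Λ : ℕ → Type*}

instance : (namingLanguage Λ).IsRelational := fun _ => inferInstanceAs (IsEmpty Empty)

instance : IsEmpty ((namingLanguage Λ).Relations 0) := ⟨fun c => c.2.false⟩

variable {M N : Type u} [(LP P).Structure M] [(LP P).Structure N] {r : ∀ n, Λ n → Fin n → M}
  {r' : ∀ n, Λ n → Fin n → N}

theorem exists_isClassAssignment_of_naming [Nonempty N] (hM : IsKPStruct P M) (hN : IsKPStruct P N)
    (hr : IsNaming P r)
    (hE : ∀ n (hn : 0 < n) c c',
      ERelP P M n hn (r n c) (r n c') ↔ ERelP P N n hn (r' n c) (r' n c')) :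
    ∃ t : ∀ n, (Fin n → M) → Fin n → N, IsClassAssignment P N t ∧
      ∀ n (hn : 0 < n) v, Function.Injective v → ∀ c,
        ERelP P N n hn (t n v) (r' n c) ↔ ERelP P M n hn v (r n c) := by
  have exists_same_names (n : ℕ) (v : Fin n → M) (hn : 0 < n) (hv : Function.Injective v) :
      ∃ w, ∀ c, ERelP P N n hn w (r' n c) ↔ ERelP P M n hn v (r n c) := by
    obtain ⟨c, hc⟩ := hr n v hv
    exact ⟨r' n c, fun c' => (hE n hn c c').symm.trans (hM.eRelP_congr_left (hc hn)).symm⟩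
  choose! t ht using exists_same_names
  refine ⟨t, fun n hn v hv τ => ?_, fun n hn v hv => ht n v hn hv⟩
  obtain ⟨c, hc⟩ := hr n v hv
  have hτ : ERelP P N n hn (t n (v ∘ τ)) (r' n c) :=
    (ht n _ hn (hv.comp τ.injective) c).2 (hM.eRelP_trans (hM.eRelP_comp_perm hn hv τ) (hc hn))
  exact hN.eRelP_trans hτ (hN.eRelP_symm ((ht n v hn hv c).2 (hc hn)))

theorem isExtensionPair_namingStructure (hM : IsKPStruct P M) (hN : IsKPStruct P N)
    (hUH : (LP P).IsUltrahomogeneous N) (hage : KP P ⊆ (LP P).age N)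
    (hr : IsNaming P r)
    (hE : ∀ n (hn : 0 < n) c c',
      ERelP P M n hn (r n c) (r n c') ↔ ERelP P N n hn (r' n c) (r' n c')) :
    @IsExtensionPair (namingLanguage Λ) M N (namingStructure P r) (namingStructure P r') := by
  let := namingStructure P r
  let := namingStructure P r'
  have := infinite_of_subset_age hage
  obtain ⟨t, ht, htr⟩ := exists_isClassAssignment_of_naming hM hN hr hE
  rw [isExtensionPair_iff_exists_embedding_closure_singleton_sup]
  intro S hS f m
  let T : (namingLanguage Λ).Substructure M := Substructure.closure _ {m} ⊔ S
  have : Finite T := ((Substructure.fg_closure_singleton m).sup hS).finite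
  have hf n (hn : 0 < n) (s : Fin n → S) (hs : Function.Injective s) :
      ERelP P N n hn (f ∘ s) (t n (S.subtype ∘ s)) := by
    have hs' : Function.Injective (S.subtype ∘ s) := S.subtype.injective.comp hs
    obtain ⟨c, hc⟩ := hr n _ hs'
    exact hN.eRelP_trans ((f.map_rel (⟨c, hn⟩ : (namingLanguage Λ).Relations n) s).2 (hc hn))
      (hN.eRelP_symm ((htr n hn _ hs' c).2 (hc hn)))
  obtain ⟨k, hkf, hkt⟩ := (ht.comp_embedding T.subtype.toEmbedding).exists_extension_realizing
    hN hUH hage (Substructure.inclusion le_sup_right : S ↪[namingLanguage Λ] T).toEmbedding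
    f.toEmbedding hf
  have hkr {n : ℕ} (c : (namingLanguage Λ).Relations n) (x : Fin n → T) :
      ERelP P N n c.2 (k ∘ x) (r' n c.1) ↔ ERelP P M n c.2 (T.subtype ∘ x) (r n c.1) := by
    by_cases hx : Function.Injective x
    · exact (hN.eRelP_congr_left (hkt n c.2 x hx)).trans
        (htr n c.2 _ (T.subtype.injective.comp hx) c.1)
    · exact iff_of_false (fun h => hx (hN.injective_of_eRelP h).1.of_comp)
        fun h => hx (hM.injective_of_eRelP h).1.of_comp
  exact ⟨⟨k, isEmptyElim, hkr⟩, DFunLike.ext _ _ fun s => (hkf s).symm⟩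

theorem IsNaming.relMap_comp_iff (hM : IsKPStruct P M) (hN : IsKPStruct P N)
    (hr : IsNaming P r)
    (hLT : ∀ n (hn : n ∈ P) c c',
      LTRelP P M n hn (r n c) (r n c') ↔ LTRelP P N n hn (r' n c) (r' n c'))
    (φ : M ↪ N)
    (hφ : ∀ n (hn : 0 < n) (v : Fin n → M) c,
      ERelP P N n hn (φ ∘ v) (r' n c) ↔ ERelP P M n hn v (r n c))
    {k : ℕ} (R : (LP P).Relations k) (z : Fin k → M) : RelMap R (φ ∘ z) ↔ RelMap R z := by
  refine relMap_comp_iff_of_forall φ (fun n hn x y => ?_) (fun n hn x y => ?_) R z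
  · by_cases hy : Function.Injective y
    · obtain ⟨c, hc⟩ := hr n y hy
      calc ERelP P N n hn (φ ∘ x) (φ ∘ y)
          ↔ ERelP P N n hn (φ ∘ x) (r' n c) := hN.eRelP_congr_right ((hφ n hn y c).2 (hc hn))
        _ ↔ ERelP P M n hn x (r n c) := hφ n hn x c
        _ ↔ ERelP P M n hn x y := (hM.eRelP_congr_right (hc hn)).symm
    · exact iff_of_false (fun h => hy (hN.injective_of_eRelP h).2.of_comp)
        fun h => hy (hM.injective_of_eRelP h).2
  · by_cases hxy : Function.Injective x ∧ Function.Injective y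
    · obtain ⟨c, hc⟩ := hr n x hxy.1
      obtain ⟨c', hc'⟩ := hr n y hxy.2
      calc LTRelP P N n hn (φ ∘ x) (φ ∘ y)
          ↔ LTRelP P N n hn (r' n c) (r' n c') := hN.ltRelP_congr hn
            (fun hn0 => (hφ n hn0 x c).2 (hc hn0)) fun hn0 => (hφ n hn0 y c').2 (hc' hn0)
        _ ↔ LTRelP P M n hn (r n c) (r n c') := (hLT n hn c c').symm
        _ ↔ LTRelP P M n hn x y := (hM.ltRelP_congr hn hc hc').symm
    · exact iff_of_false (fun h => hxy ((hN.injective_of_ltRelP h).imp (·.of_comp) (·.of_comp)))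
        fun h => hxy (hM.injective_of_ltRelP h)

theorem exists_equiv_of_isNaming [Countable M] [Countable N]
    (hUHM : (LP P).IsUltrahomogeneous M) (hageM : (LP P).age M = KP P)
    (hUHN : (LP P).IsUltrahomogeneous N) (hageN : (LP P).age N = KP P)
    (hr : IsNaming P r) (hr' : IsNaming P r')
    (hE : ∀ n (hn : 0 < n) c c',
      ERelP P M n hn (r n c) (r n c') ↔ ERelP P N n hn (r' n c) (r' n c'))
    (hLT : ∀ n (hn : n ∈ P) c c',
      LTRelP P M n hn (r n c) (r n c') ↔ LTRelP P N n hn (r' n c) (r' n c')) :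
    ∃ α : M ≃[LP P] N, ∀ n (hn : 0 < n) (v : Fin n → M) c,
      ERelP P N n hn (α ∘ v) (r' n c) ↔ ERelP P M n hn v (r n c) := by
  have hM : IsKPStruct P M := isKPStruct_of_age_subset hageM.subset
  have hN : IsKPStruct P N := isKPStruct_of_age_subset hageN.subset
  let := namingStructure P r
  let := namingStructure P r'
  obtain ⟨α, -⟩ := equiv_between_cg cg_of_countable cg_of_countable default
    (isExtensionPair_namingStructure hM hN hUHN hageN.superset hr hE)
    (isExtensionPair_namingStructure hN hM hUHM hageM.superset hr' fun n hn c c' =>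
      (hE n hn c c').symm)
  have hα n (hn : 0 < n) (v : Fin n → M) c :
      ERelP P N n hn (α ∘ v) (r' n c) ↔ ERelP P M n hn v (r n c) :=
    α.map_rel (⟨c, hn⟩ : (namingLanguage Λ).Relations n) v
  exact ⟨⟨α.toEquiv, isEmptyElim, hr.relMap_comp_iff hM hN hLT α.toEquiv.toEmbedding hα⟩, hα⟩

end Naming

theorem KP_limit_product_surjective_general {P : Set ℕ} {M N : Type u} [(LP P).Structure M]
    [(LP P).Structure N] [Countable M] [Countable N]
    (hUHM : (LP P).IsUltrahomogeneous M) (hageM : (LP P).age M = KP P)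
    (hUHN : (LP P).IsUltrahomogeneous N) (hageN : (LP P).age N = KP P)
    (σ : ∀ n, (Fin n → M) → Fin n → N)
    (hE : ∀ n (hn : 0 < n) v w, Function.Injective v → Function.Injective w →
      (ERelP P M n hn v w ↔ ERelP P N n hn (σ n v) (σ n w)))
    (hsurj : ∀ n (hn : 0 < n) w, Function.Injective w →
      ∃ v, Function.Injective v ∧ ERelP P N n hn (σ n v) w)
    (hLT : ∀ n (hn : n ∈ P) v w, Function.Injective v → Function.Injective w →
      (LTRelP P M n hn v w ↔ LTRelP P N n hn (σ n v) (σ n w))) :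
    ∃ α : M ≃[LP P] N, ∀ n (hn : 0 < n) v, Function.Injective v →
      ERelP P N n hn (α ∘ v) (σ n v) := by
  have hM : IsKPStruct P M := isKPStruct_of_age_subset hageM.subset
  have hN : IsKPStruct P N := isKPStruct_of_age_subset hageN.subset
  have naming_M : IsNaming P fun n (c : Fin n ↪ M) => ⇑c :=
    fun n v hv => ⟨⟨v, hv⟩, fun hn => hM.eRelP_refl hn hv⟩
  have naming_N : IsNaming P fun n (c : Fin n ↪ M) => σ n c := by
    intro n w hw
    rcases n.eq_zero_or_pos with rfl | hn
    · exact ⟨Function.Embedding.ofIsEmpty, fun hn => hn.false.elim⟩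
    · obtain ⟨v, hv, hvw⟩ := hsurj n hn w hw
      exact ⟨⟨v, hv⟩, fun _ => hN.eRelP_symm hvw⟩
  obtain ⟨α, hα⟩ := exists_equiv_of_isNaming hUHM hageM hUHN hageN naming_M naming_N
    (fun n hn c c' => hE n hn c c' c.injective c'.injective)
    fun n hn c c' => hLT n hn c c' c.injective c'.injective
  exact ⟨α, fun n hn v hv => (hα n hn v ⟨v, hv⟩).2 (hM.eRelP_refl hn hv)⟩

/-- the natural homomorphism
`Aut(M) → ∏_{i ∈ P} Aut(M_i, <_i) × ∏_{i ∉ P} Sym(M_i)` is surjective.  A family of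
permutations `σ_i` of the sets `M_i` of `E_i`-classes is presented by maps on
representative tuples: `σ i` sends the class of `v` to the class of `σ i v`. -/
theorem KP_limit_product_surjective (P : Set ℕ) (hP : ∀ n ∈ P, 3 ≤ n)
    (M : Type) [(LP P).Structure M] [Countable M]
    (hUH : (LP P).IsUltrahomogeneous M) (hage : (LP P).age M = KP P)
    (σ : (i : ℕ) → (Fin i → M) → (Fin i → M))
    -- σ i maps injective tuples to injective tuples
    (hinj : ∀ (i : ℕ), 0 < i → ∀ v : Fin i → M, Function.Injective v →
        Function.Injective (σ i v))
    -- σ i is well defined on E_i-classes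
    (hwd : ∀ (i : ℕ) (hi : 0 < i), ∀ v w : Fin i → M, Function.Injective v →
        Function.Injective w → ERelP P M i hi v w → ERelP P M i hi (σ i v) (σ i w))
    -- σ i is injective on E_i-classes
    (hmono : ∀ (i : ℕ) (hi : 0 < i), ∀ v w : Fin i → M, Function.Injective v →
        Function.Injective w → ERelP P M i hi (σ i v) (σ i w) → ERelP P M i hi v w)
    -- σ i is surjective on E_i-classes (so it is a permutation of M_i)
    (hsurj : ∀ (i : ℕ) (hi : 0 < i), ∀ w : Fin i → M, Function.Injective w →
        ∃ v : Fin i → M, Function.Injective v ∧ ERelP P M i hi (σ i v) w)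
    -- when i ∈ P, σ i preserves the order <_i
    (hord : ∀ (i : ℕ) (hiP : i ∈ P), ∀ v w : Fin i → M, Function.Injective v →
        Function.Injective w → (LTRelP P M i hiP v w ↔ LTRelP P M i hiP (σ i v) (σ i w))) :
    ∃ α : M ≃[LP P] M, ∀ (i : ℕ) (hi : 0 < i), ∀ v : Fin i → M, Function.Injective v →
      ERelP P M i hi (fun l => α (v l)) (σ i v) :=
  KP_limit_product_surjective_general hUH hage hUH hage σ
    (fun i hi v w hv hw => ⟨hwd i hi v w hv hw, hmono i hi v w hv hw⟩) hsurj hord
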